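/- Let k > d ≥ 0 be integers and let G be a finite simple graph on n vertices that is k-degenerate. Then α_d(G) + α_{k−d−1}(G) ≥ n. -/

import Mathlib

/-- The subgraph of `G` induced on `A` is `d`-degenerate: every nonempty (finite)
subset of `A` contains a vertex with at most `d` neighbours inside that subset. -/
def DegenOn {V : Type*} (G : SimpleGraph V) (d : ℕ) (A : Set V) : Prop :=
  ∀ S : Set V, S ⊆ A → S.Finite → S.Nonempty → ∃ v ∈ S, (S ∩ G.neighborSet v).ncard ≤ d

/-- `G` is `d`-degenerate. -/
def Degen {V : Type*} (G : SimpleGraph V) (d : ℕ) : Prop :=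
  DegenOn G d Set.univ

/-- `α_d(G)`: the maximum number of vertices of an induced `d`-degenerate subgraph of `G`. -/
noncomputable def alphaDeg {V : Type*} [Fintype V] (G : SimpleGraph V) (d : ℕ) : ℕ :=
  sSup {m : ℕ | ∃ A : Set V, DegenOn G d A ∧ A.ncard = m}

/-!
Delete vertices of degree at most `k` one at a time, and put them back in reverse order while
colouring. Each returning vertex has at most `k` coloured neighbours; if `k < ∑ i, (d i + 1)`, then
some colour `i` occurs on at most `d i` of them, and giving the vertex that colour keeps the `i`-th
class `d i`-degenerate. The colour classes have at most `α_{d i}(G)` vertices each. For two colours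
this is the claim, since `d + 1 + (k - d - 1) + 1 = k + 1`.
-/

theorem ncard_eq_sum_ncard_inter_fiber {α ι : Type*} [Fintype ι] {s : Set α} (hs : s.Finite)
    (c : α → ι) : s.ncard = ∑ i, (s ∩ c ⁻¹' {i}).ncard := by
  have hdisj : Pairwise (Function.onFun Disjoint fun i ↦ s ∩ c ⁻¹' {i}) := fun i j hij ↦
    (pairwise_disjoint_fiber c hij).mono Set.inter_subset_right Set.inter_subset_right
  have hcover : ⋃ i, s ∩ c ⁻¹' {i} = s := by
    rw [← Set.inter_iUnion, ← Set.preimage_iUnion, Set.iUnion_of_singleton, Set.preimage_univ,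
      Set.inter_univ]
  rw [← finsum_eq_sum_of_fintype,
    ← Set.ncard_iUnion_of_finite (fun _ ↦ hs.subset Set.inter_subset_left) hdisj, hcover]

namespace DegenOn

variable {V : Type*} {G : SimpleGraph V} {k : ℕ} {A B : Set V}

protected theorem empty (G : SimpleGraph V) (k : ℕ) : DegenOn G k ∅ :=
  fun _ hS _ hne ↦ absurd (Set.subset_empty_iff.1 hS) hne.ne_empty

protected theorem mono (hB : DegenOn G k B) (hAB : A ⊆ B) : DegenOn G k A :=
  fun S hS ↦ hB S (hS.trans hAB)

protected theorem insert {v : V} (hA : DegenOn G k A) (hfin : (A ∩ G.neighborSet v).Finite)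
    (hv : (A ∩ G.neighborSet v).ncard ≤ k) : DegenOn G k (insert v A) := by
  intro S hS hSfin hne
  by_cases hvS : v ∈ S
  · have hsub : S ∩ G.neighborSet v ⊆ A ∩ G.neighborSet v := fun x ⟨hxS, hvx⟩ ↦
      ⟨(hS hxS).resolve_left hvx.ne', hvx⟩
    exact ⟨v, hvS, (Set.ncard_le_ncard hsub hfin).trans hv⟩
  · exact hA S ((Set.subset_insert_iff_of_notMem hvS).1 hS) hSfin hne

@[elab_as_elim]
theorem induction_on {P : Set V → Prop} (hA : DegenOn G k A) (hfin : A.Finite) (empty : P ∅)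
    (insert : ∀ v B, B.Finite → v ∉ B → (B ∩ G.neighborSet v).ncard ≤ k → P B →
      P (insert v B)) : P A := by
  induction hn : A.ncard generalizing A with
  | zero => rwa [(Set.ncard_eq_zero hfin).1 hn]
  | succ n ih =>
    obtain ⟨v, hvA, hv⟩ :=
      hA A subset_rfl hfin (Set.nonempty_of_ncard_ne_zero (hn ▸ n.succ_ne_zero))
    have hrest : P (A \ {v}) := ih (hA.mono Set.sdiff_subset) hfin.sdiff
      (by rw [Set.ncard_sdiff_singleton_of_mem hvA, hn, Nat.add_sub_cancel])
    have hdeg : ((A \ {v}) ∩ G.neighborSet v).ncard ≤ k :=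
      (Set.ncard_le_ncard (Set.inter_subset_inter_left _ Set.sdiff_subset)
        (hfin.inter_of_left _)).trans hv
    rw [← Set.insert_sdiff_self_of_mem hvA]
    exact insert v _ hfin.sdiff (fun h ↦ h.2 rfl) hdeg hrest

theorem exists_coloring {ι : Type*} [Fintype ι] {d : ι → ℕ} (hA : DegenOn G k A)
    (hfin : A.Finite) (hd : k < ∑ i, (d i + 1)) :
    ∃ c : V → ι, ∀ i, DegenOn G (d i) (A ∩ c ⁻¹' {i}) := by
  classical
  refine hA.induction_on hfin ?empty ?insert
  case empty =>
    obtain ⟨i, -, -⟩ := Finset.exists_ne_zero_of_sum_ne_zero hd.ne_bot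
    exact ⟨fun _ ↦ i, fun j ↦ by simpa only [Set.empty_inter] using DegenOn.empty G (d j)⟩
  case insert =>
    rintro v B hB hvB hv ⟨c, hc⟩
    have hsum : ∑ i, (B ∩ c ⁻¹' {i} ∩ G.neighborSet v).ncard ≤ k := by
      simpa only [ncard_eq_sum_ncard_inter_fiber (hB.inter_of_left _) c,
        Set.inter_right_comm] using hv
    obtain ⟨i, -, hi⟩ := Finset.exists_lt_of_sum_lt (hsum.trans_lt hd)
    have hins : DegenOn G (d i) (insert v (B ∩ c ⁻¹' {i})) :=
      (hc i).insert ((hB.inter_of_left _).inter_of_left _) (Nat.lt_succ_iff.1 hi)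
    have hold (j : ι) : B ∩ Function.update c v i ⁻¹' {j} = B ∩ c ⁻¹' {j} :=
      Set.EqOn.inter_preimage_eq
        (fun x hx ↦ Function.update_of_ne (ne_of_mem_of_not_mem hx hvB) i c) {j}
    have hvi : v ∈ Function.update c v i ⁻¹' {i} := by
      rw [Set.mem_preimage, Function.update_self, Set.mem_singleton_iff]
    refine ⟨Function.update c v i, fun j ↦ ?_⟩
    obtain rfl | hji := eq_or_ne j i
    · rwa [Set.insert_inter_of_mem hvi, hold]
    · have hvj : v ∉ Function.update c v i ⁻¹' {j} := by
        rwa [Set.mem_preimage, Function.update_self, Set.mem_singleton_iff, eq_comm]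
      rw [Set.insert_inter_of_notMem hvj, hold]
      exact hc j

theorem ncard_le_alphaDeg [Fintype V] (hA : DegenOn G k A) : A.ncard ≤ alphaDeg G k := by
  refine le_csSup ⟨Nat.card V, ?_⟩ ⟨A, hA, rfl⟩
  rintro _ ⟨B, -, rfl⟩
  exact Set.ncard_le_card B

end DegenOn

theorem stmt_2_general {V ι : Type*} [Fintype V] [Fintype ι] (G : SimpleGraph V) (k : ℕ)
    (d : ι → ℕ) (hd : k < ∑ i, (d i + 1)) (hG : Degen G k) :
    Fintype.card V ≤ ∑ i, alphaDeg G (d i) := by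
  obtain ⟨c, hc⟩ := DegenOn.exists_coloring hG Set.finite_univ hd
  calc Fintype.card V = (Set.univ : Set V).ncard := by
        rw [Set.ncard_univ, Nat.card_eq_fintype_card]
    _ = ∑ i, (Set.univ ∩ c ⁻¹' {i}).ncard := ncard_eq_sum_ncard_inter_fiber Set.finite_univ c
    _ ≤ ∑ i, alphaDeg G (d i) := Finset.sum_le_sum fun i _ ↦ (hc i).ncard_le_alphaDeg

theorem stmt_2 {V : Type*} [Fintype V] (G : SimpleGraph V) (k d : ℕ) (hdk : d < k)
    (hG : Degen G k) :
    Fintype.card V ≤ alphaDeg G d + alphaDeg G (k - d - 1) := by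
  have hd : k < ∑ i, (![d, k - d - 1] i + 1) := by
    simp only [Fin.sum_univ_two, Matrix.cons_val_zero, Matrix.cons_val_one]
    omega
  exact (stmt_2_general G k _ hd hG).trans_eq (Fin.sum_univ_two _)
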